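/- Let n ≥ 1 and 0 < α, s < 1. For any two complex-valued Schwartz functions u and φ on ℝⁿ×ℝ, one has the integration by parts formula ∫_ℝ ∫_{ℝⁿ} [D_left^α u(x,t) + (-Δ)^s u(x,t)]·conj(φ(x,t)) dx dt = ∫_ℝ ∫_{ℝⁿ} u(x,t)·conj(D_right^α φ(x,t) + (-Δ)^s φ(x,t)) dx dt, where conj denotes complex conjugation (both integrals converge absolutely). -/

import Mathlib

open MeasureTheory Set

/-- The normalization constant `C_α = 1/|Γ(-α)|` for the Marchaud fractional derivative. -/
noncomputable def Calpha (α : ℝ) : ℝ := 1 / |Real.Gamma (-α)|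

/-- The normalization constant `C_{n,s} = 4^s Γ(n/2+s)/(π^{n/2}|Γ(-s)|)` for the
fractional Laplacian. -/
noncomputable def Cns (n : ℕ) (s : ℝ) : ℝ :=
  (4 : ℝ) ^ s * Real.Gamma ((n : ℝ) / 2 + s) / (Real.pi ^ ((n : ℝ) / 2) * |Real.Gamma (-s)|)

/-- The right Marchaud fractional derivative of order `α` in the time variable, for a
complex-valued function: `D_right^α φ(x,t) = C_α ∫_t^∞ (φ(x,t) - φ(x,τ))/(τ-t)^{1+α} dτ`. -/
noncomputable def marchaudRightC {n : ℕ} (α : ℝ) (φ : EuclideanSpace ℝ (Fin n) × ℝ → ℂ)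
    (x : EuclideanSpace ℝ (Fin n)) (t : ℝ) : ℂ :=
  (Calpha α : ℂ) * ∫ τ in Ioi t, (φ (x, t) - φ (x, τ)) / (((τ - t) ^ (1 + α) : ℝ) : ℂ)

/-- The left Marchaud fractional derivative of order `α` in the time variable, for a
complex-valued function: `D_left^α φ(x,t) = C_α ∫_{-∞}^t (φ(x,t) - φ(x,τ))/(t-τ)^{1+α} dτ`. -/
noncomputable def marchaudLeftC {n : ℕ} (α : ℝ) (φ : EuclideanSpace ℝ (Fin n) × ℝ → ℂ)
    (x : EuclideanSpace ℝ (Fin n)) (t : ℝ) : ℂ :=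
  (Calpha α : ℂ) * ∫ τ in Iio t, (φ (x, t) - φ (x, τ)) / (((t - τ) ^ (1 + α) : ℝ) : ℂ)

/-- The fractional Laplacian `(-Δ)^s` acting in the space variable, for a complex-valued
function: `(-Δ)^s φ(x,t) = (C_{n,s}/2) ∫_{ℝⁿ} (2φ(x,t) - φ(x+y,t) - φ(x-y,t))/|y|^{n+2s} dy`. -/
noncomputable def fracLapC {n : ℕ} (s : ℝ) (φ : EuclideanSpace ℝ (Fin n) × ℝ → ℂ)
    (x : EuclideanSpace ℝ (Fin n)) (t : ℝ) : ℂ :=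
  ((Cns n s / 2 : ℝ) : ℂ) * ∫ y : EuclideanSpace ℝ (Fin n),
    (2 * φ (x, t) - φ (x + y, t) - φ (x - y, t)) / ((‖y‖ ^ ((n : ℝ) + 2 * s) : ℝ) : ℂ)

open scoped ComplexConjugate

section Fubini

variable {P Y : Type*} [MeasurableSpace P] [MeasurableSpace Y] {μ : Measure P} {ν : Measure Y}

theorem integrable_prod_mul_of_ae_bound {h : P → ℂ} (hh : Integrable h μ) {F : P → Y → ℂ}
    (hF : AEStronglyMeasurable (Function.uncurry F) (μ.prod ν)) {g : Y → ℝ} (hg : Integrable g ν)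
    (hFg : ∀ᵐ y ∂ν, ∀ p, ‖F p y‖ ≤ g y) :
    Integrable (Function.uncurry fun p y => F p y * h p) (μ.prod ν) := by
  refine (hh.norm.mul_prod hg).mono (hF.mul hh.aestronglyMeasurable.comp_fst) ?_
  filter_upwards [Measure.quasiMeasurePreserving_snd.ae hFg] with z hz
  have hz' := hz z.1
  have h0 : 0 ≤ g z.2 := (norm_nonneg _).trans hz'
  simp only [Function.uncurry, norm_mul, norm_norm, Real.norm_of_nonneg h0]
  rw [mul_comm]
  gcongr

/-- If the kernels `F` and `G` are dominated by an integrable function of the parameter `y` and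
are adjoint to each other for each fixed `y`, then so are their integrals over `y`. -/
theorem integral_adjoint_of_ae_bound [SFinite μ] [SFinite ν] {f h : P → ℂ}
    (hf : Integrable f μ) (hh : Integrable h μ) {F G : P → Y → ℂ}
    (hF : AEStronglyMeasurable (Function.uncurry F) (μ.prod ν))
    (hG : AEStronglyMeasurable (Function.uncurry G) (μ.prod ν)) {g₁ g₂ : Y → ℝ}
    (hg₁ : Integrable g₁ ν) (hg₂ : Integrable g₂ ν) (hFg : ∀ᵐ y ∂ν, ∀ p, ‖F p y‖ ≤ g₁ y)
    (hGg : ∀ᵐ y ∂ν, ∀ p, ‖G p y‖ ≤ g₂ y)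
    (hFG : ∀ y, ∫ p, F p y * conj (h p) ∂μ = ∫ p, f p * conj (G p y) ∂μ) :
    Integrable (fun p => (∫ y, F p y ∂ν) * conj (h p)) μ ∧
    Integrable (fun p => f p * conj (∫ y, G p y ∂ν)) μ ∧
    ∫ p, (∫ y, F p y ∂ν) * conj (h p) ∂μ = ∫ p, f p * conj (∫ y, G p y ∂ν) ∂μ := by
  have h1 := integrable_prod_mul_of_ae_bound (h := fun p => conj (h p))
    (Complex.conjCLE.toContinuousLinearMap.integrable_comp hh) hF hg₁ hFg
  have h2 := integrable_prod_mul_of_ae_bound hf (F := fun p y => conj (G p y))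
    (Complex.continuous_conj.comp_aestronglyMeasurable hG) hg₂ (by simpa using hGg)
  have e1 : ∀ p, (∫ y, F p y ∂ν) * conj (h p) = ∫ y, F p y * conj (h p) ∂ν := fun p =>
    (integral_mul_const _ _).symm
  have e2 : ∀ p, f p * conj (∫ y, G p y ∂ν) = ∫ y, conj (G p y) * f p ∂ν := fun p => by
    rw [integral_mul_const, integral_conj, mul_comm]
  simp only [e1, e2]
  refine ⟨h1.integral_prod_left, h2.integral_prod_left, ?_⟩
  refine (integral_integral_swap h1).trans (Eq.trans ?_ (integral_integral_swap h2).symm)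
  refine integral_congr_ae (.of_forall fun y => ?_)
  simpa only [mul_comm (conj (G _ y))] using hFG y

end Fubini

section Schwartz

variable {E F : Type*} [NormedAddCommGroup E] [NormedSpace ℝ E] [NormedAddCommGroup F]
  [NormedSpace ℝ F]

theorem SchwartzMap.exists_norm_le (f : SchwartzMap E F) : ∃ M, 0 ≤ M ∧ ∀ p, ‖f p‖ ≤ M :=
  ⟨_, apply_nonneg _ _, f.norm_le_seminorm ℝ⟩

theorem SchwartzMap.exists_norm_sub_le (f : SchwartzMap E F) :
    ∃ L, 0 ≤ L ∧ ∀ p q, ‖f p - f q‖ ≤ L * ‖p - q‖ := by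
  obtain ⟨L, hL0, hL⟩ := (SchwartzMap.fderivCLM ℝ E F f).exists_norm_le
  exact ⟨L, hL0, fun p q => convex_univ.norm_image_sub_le_of_norm_fderiv_le
    (fun x _ => f.differentiableAt) (fun x _ => hL x) (mem_univ q) (mem_univ p)⟩

theorem SchwartzMap.exists_norm_second_difference_le (f : SchwartzMap E F) :
    ∃ L, 0 ≤ L ∧ ∀ p v, ‖(f p - f (p + v)) - (f (p - v) - f p)‖ ≤ L * ‖v‖ ^ 2 := by
  obtain ⟨L, hL0, hL⟩ := (SchwartzMap.fderivCLM ℝ E F f).exists_norm_sub_le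
  refine ⟨L, hL0, fun p v => ?_⟩
  have hd : ∀ x, HasFDerivAt (fun q => f q - f (q + v)) (fderiv ℝ f x - fderiv ℝ f (x + v)) x :=
    fun x => f.differentiableAt.hasFDerivAt.sub
      ((hasFDerivAt_comp_add_right v).2 f.differentiableAt.hasFDerivAt)
  have := convex_univ.norm_image_sub_le_of_norm_hasFDerivWithin_le
    (fun x _ => (hd x).hasFDerivWithinAt) (C := L * ‖v‖)
    (fun x _ => by simpa using hL x (x + v)) (mem_univ (p - v)) (mem_univ p)
  simpa [pow_two, mul_assoc] using this

theorem SchwartzMap.exists_norm_sub_le_min (f : SchwartzMap E F) :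
    ∃ C, ∀ p q, ‖f p - f q‖ ≤ C * min (‖p - q‖ ^ (1 : ℝ)) 1 := by
  obtain ⟨M, hM0, hM⟩ := f.exists_norm_le
  obtain ⟨L, hL0, hL⟩ := f.exists_norm_sub_le
  refine ⟨L + 2 * M, fun p q => ?_⟩
  rw [Real.rpow_one, mul_min_of_nonneg _ _ (by positivity)]
  refine le_min ((hL p q).trans (by gcongr; linarith)) ?_
  linarith [norm_sub_le (f p) (f q), hM p, hM q]

theorem SchwartzMap.exists_norm_second_difference_le_min (f : SchwartzMap E ℂ) :
    ∃ C, ∀ p v, ‖2 * f p - f (p + v) - f (p - v)‖ ≤ C * min (‖v‖ ^ (2 : ℝ)) 1 := by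
  obtain ⟨M, hM0, hM⟩ := f.exists_norm_le
  obtain ⟨L, hL0, hL⟩ := f.exists_norm_second_difference_le
  refine ⟨L + 4 * M, fun p v => ?_⟩
  rw [Real.rpow_two, mul_min_of_nonneg _ _ (by positivity)]
  have e : 2 * f p - f (p + v) - f (p - v) = (f p - f (p + v)) - (f (p - v) - f p) := by ring
  rw [e]
  refine le_min ((hL p v).trans (by gcongr; linarith)) ?_
  linarith [norm_sub_le (f p - f (p + v)) (f (p - v) - f p), norm_sub_le (f p) (f (p + v)),
    norm_sub_le (f (p - v)) (f p), hM p, hM (p + v), hM (p - v)]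

end Schwartz

section Kernel

theorem integrableOn_min_rpow_div {a b : ℝ} (ha : 0 < a) (hab : a < b) :
    IntegrableOn (fun r : ℝ => min (r ^ b) 1 / r ^ (1 + a)) (Ioi 0) := by
  have hm : Measurable fun r : ℝ => min (r ^ b) 1 / r ^ (1 + a) := by fun_prop
  rw [← Ioc_union_Ioi_eq_Ioi zero_le_one]
  refine IntegrableOn.union ?_ ?_
  · have h := (intervalIntegral.intervalIntegrable_rpow' (a := 0) (b := 1)
      (show -1 < b - (1 + a) by linarith)).1
    refine Integrable.mono h hm.aestronglyMeasurable ?_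
    refine (ae_restrict_mem measurableSet_Ioc).mono fun r hr => ?_
    have hr0 : 0 < r := hr.1
    rw [Real.rpow_sub hr0, Real.norm_of_nonneg (by positivity), Real.norm_of_nonneg (by positivity)]
    gcongr
    exact min_le_left _ _
  · have h := integrableOn_Ioi_rpow_of_lt (show -(1 + a) < -1 by linarith) one_pos
    refine Integrable.mono h hm.aestronglyMeasurable ?_
    refine (ae_restrict_mem measurableSet_Ioi).mono fun r hr => ?_
    have hr0 : 0 < r := one_pos.trans hr
    rw [Real.rpow_neg hr0.le, ← one_div, Real.norm_of_nonneg (by positivity),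
      Real.norm_of_nonneg (by positivity)]
    gcongr
    exact min_le_right _ _

theorem integrable_min_norm_rpow_div {n : ℕ} (hn : 1 ≤ n) {a b : ℝ} (ha : 0 < a) (hab : a < b) :
    Integrable fun y : EuclideanSpace ℝ (Fin n) => min (‖y‖ ^ b) 1 / ‖y‖ ^ ((n : ℝ) + a) := by
  have : Nonempty (Fin n) := ⟨⟨0, hn⟩⟩
  refine (integrable_fun_norm_addHaar volume
    (f := fun r : ℝ => min (r ^ b) 1 / r ^ ((n : ℝ) + a))).2 ?_
  refine (integrableOn_min_rpow_div ha hab).congr_fun (fun r (hr : 0 < r) => ?_) measurableSet_Ioi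
  have e : r ^ ((n : ℝ) + a) = r ^ (n - 1) * r ^ (1 + a) := by
    rw [← Real.rpow_natCast, ← Real.rpow_add hr, Nat.cast_sub hn]
    congr 1
    push_cast
    ring
  simp only [finrank_euclideanSpace_fin, smul_eq_mul, e]
  field_simp

end Kernel

section Translation

theorem integral_translate_mul_conj {V : Type*} [AddGroup V] [MeasurableSpace V]
    [MeasurableAdd V] (μ : Measure V) [μ.IsAddRightInvariant] (u φ : V → ℂ) (v : V) :
    ∫ p, u (p + v) * conj (φ p) ∂μ = ∫ p, u p * conj (φ (p - v)) ∂μ := by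
  simpa using integral_add_right_eq_self (μ := μ) (fun p => u p * conj (φ (p - v))) v

variable {V : Type*} [NormedAddCommGroup V] [NormedSpace ℝ V] [FiniteDimensional ℝ V]
  [MeasurableSpace V] [BorelSpace V] (μ : Measure V) [μ.IsAddHaarMeasure]

theorem SchwartzMap.integrable_translate_mul_conj (u φ : SchwartzMap V ℂ) (v w : V) :
    Integrable (fun p => u (p + v) * conj (φ (p + w))) μ := by
  obtain ⟨M, -, hM⟩ := u.exists_norm_le
  have hφ : Integrable (fun p => conj (φ (p + w))) μ :=
    Complex.conjCLE.toContinuousLinearMap.integrable_comp (φ.integrable.comp_add_right w)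
  exact hφ.bdd_mul (by fun_prop) (.of_forall fun p => hM (p + v))

theorem SchwartzMap.integral_sub_translate_mul_conj (u φ : SchwartzMap V ℂ) (v : V) :
    ∫ p, (u p - u (p - v)) * conj (φ p) ∂μ = ∫ p, u p * conj (φ p - φ (p + v)) ∂μ := by
  have h0 := u.integrable_translate_mul_conj μ φ 0 0
  have h1 := u.integrable_translate_mul_conj μ φ (-v) 0
  have h2 := u.integrable_translate_mul_conj μ φ 0 v
  have h3 := integral_translate_mul_conj μ u φ (-v)
  simp only [add_zero, ← sub_eq_add_neg, sub_neg_eq_add] at h0 h1 h2 h3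
  simp only [map_sub, sub_mul, mul_sub]
  rw [integral_sub h0 h1, integral_sub h0 h2, h3]

theorem SchwartzMap.integral_second_difference_mul_conj (u φ : SchwartzMap V ℂ) (v : V) :
    ∫ p, (2 * u p - u (p + v) - u (p - v)) * conj (φ p) ∂μ =
      ∫ p, u p * conj (2 * φ p - φ (p + v) - φ (p - v)) ∂μ := by
  have h1 := u.integral_sub_translate_mul_conj μ φ v
  have h2 := u.integral_sub_translate_mul_conj μ φ (-v)
  have i0 := u.integrable_translate_mul_conj μ φ 0 0
  have i1 := u.integrable_translate_mul_conj μ φ (-v) 0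
  have i2 := u.integrable_translate_mul_conj μ φ v 0
  have j1 := u.integrable_translate_mul_conj μ φ 0 (-v)
  have j2 := u.integrable_translate_mul_conj μ φ 0 v
  simp only [add_zero, ← sub_eq_add_neg, sub_neg_eq_add, map_sub, sub_mul, mul_sub]
    at h1 h2 i0 i1 i2 j1 j2
  have e1 : ∀ p, (2 * u p - u (p + v) - u (p - v)) * conj (φ p) =
      (u p * conj (φ p) - u (p - v) * conj (φ p)) +
      (u p * conj (φ p) - u (p + v) * conj (φ p)) := fun p => by ring
  have e2 : ∀ p, u p * conj (2 * φ p - φ (p + v) - φ (p - v)) =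
      (u p * conj (φ p) - u p * conj (φ (p + v))) +
      (u p * conj (φ p) - u p * conj (φ (p - v))) := fun p => by
    simp only [map_sub, map_mul, Complex.conj_ofNat]
    ring
  simp only [e1, e2]
  refine (integral_add (i0.sub i1) (i0.sub i2)).trans ?_
  refine Eq.trans ?_ (integral_add (i0.sub j2) (i0.sub j1)).symm
  exact congrArg₂ (· + ·) h1 h2

end Translation

section Operators

variable {n : ℕ}

instance isAddHaarMeasure_volume_prod_real :
    (volume : Measure (EuclideanSpace ℝ (Fin n) × ℝ)).IsAddHaarMeasure :=
  inferInstanceAs (Measure.prod volume volume).IsAddHaarMeasure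

theorem marchaudLeftC_eq_integral_Ioi (α : ℝ) (u : EuclideanSpace ℝ (Fin n) × ℝ → ℂ)
    (p : EuclideanSpace ℝ (Fin n) × ℝ) :
    marchaudLeftC α u p.1 p.2 = (Calpha α : ℂ) *
      ∫ r in Ioi (0 : ℝ), (u p - u (p - (0, r))) / ((r ^ (1 + α) : ℝ) : ℂ) := by
  rw [marchaudLeftC, ← integral_indicator measurableSet_Iio,
    ← integral_indicator measurableSet_Ioi, ← integral_sub_left_eq_self _ volume p.2]
  congr 2 with r
  simp [indicator, Prod.sub_def]

theorem marchaudRightC_eq_integral_Ioi (α : ℝ) (u : EuclideanSpace ℝ (Fin n) × ℝ → ℂ)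
    (p : EuclideanSpace ℝ (Fin n) × ℝ) :
    marchaudRightC α u p.1 p.2 = (Calpha α : ℂ) *
      ∫ r in Ioi (0 : ℝ), (u p - u (p + (0, r))) / ((r ^ (1 + α) : ℝ) : ℂ) := by
  rw [marchaudRightC, ← integral_indicator measurableSet_Ioi,
    ← integral_indicator measurableSet_Ioi, ← integral_add_left_eq_self _ p.2]
  congr 2 with r
  simp [indicator, Prod.add_def]

theorem fracLapC_eq_integral (s : ℝ) (u : EuclideanSpace ℝ (Fin n) × ℝ → ℂ)
    (p : EuclideanSpace ℝ (Fin n) × ℝ) :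
    fracLapC s u p.1 p.2 = ((Cns n s / 2 : ℝ) : ℂ) * ∫ y : EuclideanSpace ℝ (Fin n),
      (2 * u p - u (p + (y, 0)) - u (p - (y, 0))) / ((‖y‖ ^ ((n : ℝ) + 2 * s) : ℝ) : ℂ) := by
  simp [fracLapC, Prod.add_def, Prod.sub_def]

theorem integral_const_mul_adjoint {P : Type*} [MeasurableSpace P] {μ : Measure P} (c : ℝ)
    {f h A B : P → ℂ}
    (H : Integrable (fun p => A p * conj (h p)) μ ∧ Integrable (fun p => f p * conj (B p)) μ ∧
      ∫ p, A p * conj (h p) ∂μ = ∫ p, f p * conj (B p) ∂μ) :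
    Integrable (fun p => (c * A p) * conj (h p)) μ ∧
    Integrable (fun p => f p * conj (c * B p)) μ ∧
      ∫ p, (c * A p) * conj (h p) ∂μ = ∫ p, f p * conj (c * B p) ∂μ := by
  simp only [map_mul, Complex.conj_ofReal, mul_assoc, mul_left_comm (f _)]
  exact ⟨H.1.const_mul _, H.2.1.const_mul _, by
    rw [integral_const_mul, integral_const_mul, H.2.2]⟩

theorem integral_marchaudLeftC_mul_conj {α : ℝ} (hα0 : 0 < α) (hα1 : α < 1)
    (u φ : SchwartzMap (EuclideanSpace ℝ (Fin n) × ℝ) ℂ) :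
    Integrable (fun p : EuclideanSpace ℝ (Fin n) × ℝ =>
      marchaudLeftC α u p.1 p.2 * conj (φ p)) ∧
    Integrable (fun p : EuclideanSpace ℝ (Fin n) × ℝ =>
      u p * conj (marchaudRightC α φ p.1 p.2)) ∧
    ∫ p : EuclideanSpace ℝ (Fin n) × ℝ, marchaudLeftC α u p.1 p.2 * conj (φ p) =
      ∫ p : EuclideanSpace ℝ (Fin n) × ℝ, u p * conj (marchaudRightC α φ p.1 p.2) := by
  simp only [marchaudLeftC_eq_integral_Ioi, marchaudRightC_eq_integral_Ioi]
  obtain ⟨C, hC⟩ := u.exists_norm_sub_le_min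
  obtain ⟨D, hD⟩ := φ.exists_norm_sub_le_min
  have hk := integrableOn_min_rpow_div hα0 hα1
  have hu := u.continuous.measurable
  have hφ := φ.continuous.measurable
  refine integral_const_mul_adjoint _ (integral_adjoint_of_ae_bound u.integrable φ.integrable
    (by unfold Function.uncurry; exact Measurable.aestronglyMeasurable (by fun_prop))
    (by unfold Function.uncurry; exact Measurable.aestronglyMeasurable (by fun_prop))
    (hk.const_mul C) (hk.const_mul D) ?_ ?_ fun r => ?_)
  · refine (ae_restrict_mem measurableSet_Ioi).mono fun (r : ℝ) (hr : 0 < r) p => ?_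
    have := hC p (p - (0, r))
    rw [norm_div, Complex.norm_real, Real.norm_of_nonneg (by positivity), ← mul_div_assoc]
    gcongr
    simpa [Prod.norm_def, abs_of_pos hr, hr.le] using this
  · refine (ae_restrict_mem measurableSet_Ioi).mono fun (r : ℝ) (hr : 0 < r) p => ?_
    have := hD p (p + (0, r))
    rw [norm_div, Complex.norm_real, Real.norm_of_nonneg (by positivity), ← mul_div_assoc]
    gcongr
    simpa [Prod.norm_def, abs_of_pos hr, hr.le] using this
  · simp only [map_div₀, Complex.conj_ofReal, div_mul_eq_mul_div, ← mul_div_assoc]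
    rw [integral_div, integral_div, u.integral_sub_translate_mul_conj volume]

theorem integral_fracLapC_mul_conj (hn : 1 ≤ n) {s : ℝ} (hs0 : 0 < s) (hs1 : s < 1)
    (u φ : SchwartzMap (EuclideanSpace ℝ (Fin n) × ℝ) ℂ) :
    Integrable (fun p : EuclideanSpace ℝ (Fin n) × ℝ => fracLapC s u p.1 p.2 * conj (φ p)) ∧
    Integrable (fun p : EuclideanSpace ℝ (Fin n) × ℝ => u p * conj (fracLapC s φ p.1 p.2)) ∧
    ∫ p : EuclideanSpace ℝ (Fin n) × ℝ, fracLapC s u p.1 p.2 * conj (φ p) =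
      ∫ p : EuclideanSpace ℝ (Fin n) × ℝ, u p * conj (fracLapC s φ p.1 p.2) := by
  simp only [fracLapC_eq_integral]
  have hk := integrable_min_norm_rpow_div hn (a := 2 * s) (b := 2) (by linarith) (by linarith)
  have bound : ∀ f : SchwartzMap (EuclideanSpace ℝ (Fin n) × ℝ) ℂ, ∃ C : ℝ,
      ∀ (y : EuclideanSpace ℝ (Fin n)) p,
        ‖(2 * f p - f (p + (y, 0)) - f (p - (y, 0))) / ((‖y‖ ^ ((n : ℝ) + 2 * s) : ℝ) : ℂ)‖ ≤
          C * (min (‖y‖ ^ (2 : ℝ)) 1 / ‖y‖ ^ ((n : ℝ) + 2 * s)) := fun f => by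
    obtain ⟨C, hC⟩ := f.exists_norm_second_difference_le_min
    refine ⟨C, fun y p => ?_⟩
    rw [norm_div, Complex.norm_real, Real.norm_of_nonneg (by positivity), ← mul_div_assoc]
    gcongr
    simpa [Prod.norm_def] using hC p (y, 0)
  obtain ⟨C, hC⟩ := bound u
  obtain ⟨D, hD⟩ := bound φ
  have hu := u.continuous.measurable
  have hφ := φ.continuous.measurable
  refine integral_const_mul_adjoint _ (integral_adjoint_of_ae_bound u.integrable φ.integrable
    (by unfold Function.uncurry; exact Measurable.aestronglyMeasurable (by fun_prop))
    (by unfold Function.uncurry; exact Measurable.aestronglyMeasurable (by fun_prop))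
    (hk.const_mul C) (hk.const_mul D) (.of_forall hC) (.of_forall hD) fun y => ?_)
  simp only [map_div₀, Complex.conj_ofReal, div_mul_eq_mul_div, ← mul_div_assoc]
  rw [integral_div, integral_div, u.integral_second_difference_mul_conj volume]

end Operators

/-- "integration by parts" for the dual fractional operator: for Schwartz
functions `u, φ` on `ℝⁿ × ℝ`,
`∫∫ [D_left^α u + (-Δ)^s u]·conj(φ) = ∫∫ u·conj(D_right^α φ + (-Δ)^s φ)`,
both integrals converging absolutely. -/
theorem integration_by_parts_dual_fractional
    (n : ℕ) (hn : 1 ≤ n) (α s : ℝ) (hα0 : 0 < α) (hα1 : α < 1)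
    (hs0 : 0 < s) (hs1 : s < 1)
    (u φ : SchwartzMap (EuclideanSpace ℝ (Fin n) × ℝ) ℂ) :
    Integrable (fun p : EuclideanSpace ℝ (Fin n) × ℝ =>
      (marchaudLeftC α (⇑u) p.1 p.2 + fracLapC s (⇑u) p.1 p.2) * starRingEnd ℂ (φ p)) ∧
    Integrable (fun p : EuclideanSpace ℝ (Fin n) × ℝ =>
      u p * starRingEnd ℂ (marchaudRightC α (⇑φ) p.1 p.2 + fracLapC s (⇑φ) p.1 p.2)) ∧
    (∫ p : EuclideanSpace ℝ (Fin n) × ℝ,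
      (marchaudLeftC α (⇑u) p.1 p.2 + fracLapC s (⇑u) p.1 p.2) * starRingEnd ℂ (φ p)) =
    ∫ p : EuclideanSpace ℝ (Fin n) × ℝ,
      u p * starRingEnd ℂ (marchaudRightC α (⇑φ) p.1 p.2 + fracLapC s (⇑φ) p.1 p.2) := by
  obtain ⟨hL, hR, hLR⟩ := integral_marchaudLeftC_mul_conj hα0 hα1 u φ
  obtain ⟨hu, hφ, huφ⟩ := integral_fracLapC_mul_conj hn hs0 hs1 u φ
  simp only [map_add, add_mul, mul_add]
  exact ⟨hL.add hu, hR.add hφ, by rw [integral_add hL hu, integral_add hR hφ, hLR, huφ]⟩
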